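/- Let α ∈ [0,1) be irrational, let h : 𝕋¹ → ℝ be a C^∞ function, and let T : 𝕋² → 𝕋² be the skew product T(x,y) = (x+α, y+h(x) mod 1) on 𝕋² = (ℝ/ℤ)². Then for every T-invariant Borel probability measure ρ on 𝕋², the measure complexity of (𝕋²,T,ρ) is sub-polynomial. -/

import Mathlib

open MeasureTheory Filter

/-- The Bowen-type averaged metric `d̄_n(x,y) = (1/n) ∑_{i=0}^{n-1} d(Tⁱx, Tⁱy)`. -/
noncomputable def dbar {X : Type*} [PseudoMetricSpace X] (T : X → X) (n : ℕ) (x y : X) : ℝ :=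
  (∑ i ∈ Finset.range n, dist (T^[i] x) (T^[i] y)) / n

/-- The measure complexity function `S_n(d,ρ,ε)`. -/
noncomputable def measureComplexity {X : Type*} [PseudoMetricSpace X] [MeasurableSpace X]
    (T : X → X) (ρ : Measure X) (n : ℕ) (ε : ℝ) : ℕ :=
  sInf {m : ℕ | ∃ xs : Fin m → X,
    1 - ε < (ρ (⋃ i, {y | dbar T n (xs i) y < ε})).toReal}

/-- The measure complexity of `(X,T,ρ)` is sub-polynomial. -/
def SubPolynomialComplexity {X : Type*} [PseudoMetricSpace X] [MeasurableSpace X]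
    (T : X → X) (ρ : Measure X) : Prop :=
  ∀ τ > (0 : ℝ), ∀ ε > (0 : ℝ),
    Filter.atTop.liminf (fun n : ℕ => (measureComplexity T ρ n ε : ℝ) / (n : ℝ) ^ τ) = 0

open Real

/-! Expand `h` in a Fourier series and let `q` be the denominator of a Dirichlet approximation
`|α - p / q| < 1 / q ^ 2`. For `0 < |m| ≤ q / 2` the small divisor `‖m • α‖` is at least
`1 / (2 * q)`, so the Birkhoff sums of the `m`-th character are geometric sums bounded by `q`; the
higher frequencies contribute `O(n / q ^ K)` for every `K`, because the Fourier coefficients of a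
smooth function decay faster than any power. Hence up to time `n = q ^ L` the Birkhoff sums of `h`
are `O(q)`-Lipschitz up to an error `O(1 / q)`, and a grid of mesh comparable to `1 / q`, which has
`O(q ^ 2)` points, is `ε`-dense for the metrics `d̄_n`. As `L` is arbitrary, `q ^ 2` is smaller than
any given power of `n`. -/

section Liminf

lemma liminf_eq_zero_of_frequently_le {ι : Type*} {f : Filter ι} {u : ι → ℝ} (hu : ∀ i, 0 ≤ u i)
    (hsmall : ∀ δ > 0, ∃ᶠ i in f, u i ≤ δ) : liminf u f = 0 := by
  have hbdd : f.IsBoundedUnder (· ≥ ·) u := isBoundedUnder_of ⟨0, hu⟩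
  refine le_antisymm (le_of_forall_pos_le_add fun δ hδ => ?_) ?_
  · rw [zero_add]
    exact liminf_le_of_frequently_le (hsmall δ hδ) hbdd
  · have hcobdd : f.IsCoboundedUnder (· ≥ ·) u := ⟨1, fun b hb => by
      obtain ⟨i, hi1, hbi⟩ := ((hsmall 1 one_pos).and_eventually (eventually_map.1 hb)).exists
      exact hbi.trans hi1⟩
    exact le_liminf_of_le hcobdd (.of_forall hu)

end Liminf

section MeasureComplexity

variable {X : Type*} [PseudoMetricSpace X] {T : X → X}

lemma dbar_le_of_forall_dist_le {n : ℕ} {x y : X} {δ : ℝ} (hδ : 0 ≤ δ)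
    (h : ∀ i < n, dist (T^[i] x) (T^[i] y) ≤ δ) : dbar T n x y ≤ δ := by
  refine div_le_of_le_mul₀ n.cast_nonneg hδ ?_
  calc ∑ i ∈ Finset.range n, dist (T^[i] x) (T^[i] y)
      ≤ ∑ _i ∈ Finset.range n, δ := Finset.sum_le_sum fun i hi => h i (Finset.mem_range.1 hi)
    _ = δ * n := by rw [Finset.sum_const, Finset.card_range, nsmul_eq_mul, mul_comm]

variable [MeasurableSpace X] {ρ : Measure X}

lemma measureComplexity_le_card [IsProbabilityMeasure ρ] {ι : Type*} [Fintype ι] {n : ℕ} {ε : ℝ}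
    (hε : 0 < ε) (c : ι → X) (hc : ∀ x, ∃ i, dbar T n (c i) x < ε) :
    measureComplexity T ρ n ε ≤ Fintype.card ι := by
  let e := Fintype.equivFin ι
  have hcover : ⋃ k, {x | dbar T n (c (e.symm k)) x < ε} = Set.univ := by
    refine Set.eq_univ_of_forall fun x => Set.mem_iUnion.2 ?_
    obtain ⟨i, hi⟩ := hc x
    exact ⟨e i, by simpa using hi⟩
  refine Nat.sInf_le ⟨c ∘ e.symm, ?_⟩
  simp only [Function.comp_apply, hcover]
  simpa using hε

theorem subPolynomialComplexity_of_frequently_le (d : ℕ)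
    (h : ∀ ε > 0, ∀ L : ℕ, ∃ C : ℝ, ∃ᶠ q : ℕ in atTop,
      (measureComplexity T ρ (q ^ L) ε : ℝ) ≤ C * q ^ d) :
    SubPolynomialComplexity T ρ := by
  intro τ hτ ε hε
  refine liminf_eq_zero_of_frequently_le (fun n => by positivity) fun δ hδ => ?_
  obtain ⟨L, hL⟩ := exists_nat_gt ((d + 1) / τ)
  have hL0 : L ≠ 0 := by
    have : (0 : ℝ) < L := lt_trans (by positivity) hL
    exact_mod_cast this.ne'
  have hLτ : ((d + 1 : ℕ) : ℝ) ≤ L * τ := by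
    rw [div_lt_iff₀ hτ] at hL
    exact_mod_cast hL.le
  obtain ⟨C, hC⟩ := h ε hε L
  have hlarge : ∀ᶠ q : ℕ in atTop, 0 < q ∧ C / q < δ :=
    (eventually_gt_atTop 0).and ((tendsto_const_div_atTop_nhds_zero_nat C).eventually_lt_const hδ)
  refine (tendsto_pow_atTop hL0).frequently ((hC.and_eventually hlarge).mono ?_)
  rintro q ⟨hq, hq0, hqδ⟩
  have hq1 : (1 : ℝ) ≤ q := by exact_mod_cast hq0
  have hpow : (q : ℝ) ^ (d + 1) ≤ ((q ^ L : ℕ) : ℝ) ^ τ := by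
    rw [Nat.cast_pow, ← rpow_natCast, ← rpow_natCast, ← rpow_mul (by positivity)]
    exact rpow_le_rpow_of_exponent_le hq1 hLτ
  calc (measureComplexity T ρ (q ^ L) ε : ℝ) / ((q ^ L : ℕ) : ℝ) ^ τ
      ≤ measureComplexity T ρ (q ^ L) ε / (q : ℝ) ^ (d + 1) := by gcongr
    _ ≤ C * q ^ d / (q : ℝ) ^ (d + 1) := by gcongr
    _ = C / q := by rw [pow_succ]; field_simp
    _ ≤ δ := hqδ.le

end MeasureComplexity

section SkewProduct

/-- The skew product over the base map `f` with fibre group `G` and cocycle `g`, written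
additively in the fibre. -/
def skewProduct {X G : Type*} [Add G] (f : X → X) (g : X → G) (p : X × G) : X × G :=
  (f p.1, p.2 + g p.1)

lemma iterate_skewProduct {X G : Type*} [AddCommMonoid G] (f : X → X) (g : X → G) (n : ℕ)
    (p : X × G) : (skewProduct f g)^[n] p = (f^[n] p.1, p.2 + birkhoffSum f g n p.1) := by
  induction n with
  | zero => simp
  | succ n ih =>
    rw [Function.iterate_succ_apply', ih, skewProduct, Function.iterate_succ_apply',
      birkhoffSum_succ, add_assoc]

variable {X G : Type*} [PseudoMetricSpace X] [SeminormedAddCommGroup G] {f : X → X}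

lemma dist_iterate_skewProduct_le (hf : LipschitzWith 1 f) (g : X → G) (n : ℕ) (p p' : X × G) :
    dist ((skewProduct f g)^[n] p) ((skewProduct f g)^[n] p') ≤
      dist p p' + dist (birkhoffSum f g n p.1) (birkhoffSum f g n p'.1) := by
  rw [iterate_skewProduct, iterate_skewProduct, Prod.dist_eq]
  refine max_le ?_ ((dist_add_add_le _ _ _ _).trans ?_)
  · have hbase : dist (f^[n] p.1) (f^[n] p'.1) ≤ dist p.1 p'.1 := by
      simpa using (hf.iterate n).dist_le_mul p.1 p'.1
    exact (hbase.trans (le_max_left _ _)).trans (le_add_of_nonneg_right dist_nonneg)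
  · gcongr
    exact le_max_right _ _

theorem measureComplexity_skewProduct_le [MeasurableSpace (X × G)] {ρ : Measure (X × G)}
    [IsProbabilityMeasure ρ] {ι κ : Type*} [Fintype ι] [Fintype κ] (hf : LipschitzWith 1 f)
    {g : X → G} {n : ℕ} {δ η ε : ℝ} (u : ι → X) (v : κ → G) (hδ : 0 ≤ δ) (hη : 0 ≤ η)
    (hε : δ + η < ε)
    (hu : ∀ x, ∃ i, dist (u i) x ≤ δ) (hv : ∀ y, ∃ k, dist (v k) y ≤ δ)
    (hg : ∀ i < n, ∀ x y, dist x y ≤ δ → dist (birkhoffSum f g i x) (birkhoffSum f g i y) ≤ η) :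
    measureComplexity (skewProduct f g) ρ n ε ≤ Fintype.card ι * Fintype.card κ := by
  rw [← Fintype.card_prod]
  refine measureComplexity_le_card ((add_nonneg hδ hη).trans_lt hε)
    (fun k => (u k.1, v k.2)) fun p => ?_
  obtain ⟨i, hi⟩ := hu p.1
  obtain ⟨k, hk⟩ := hv p.2
  refine ⟨(i, k), (dbar_le_of_forall_dist_le (add_nonneg hδ hη) fun j hj => ?_).trans_lt hε⟩
  exact (dist_iterate_skewProduct_le hf g j _ p).trans
    (add_le_add (max_le hi hk) (hg j hj _ _ hi))

end SkewProduct

section Circle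

lemma norm_coe_addCircle_le (p t : ℝ) : ‖(t : AddCircle p)‖ ≤ |t| :=
  QuotientAddGroup.norm_mk_le_norm

lemma exists_dist_div_le (N : ℕ) [NeZero N] (x : UnitAddCircle) :
    ∃ j : Fin N, dist (((j : ℝ) / N : ℝ) : UnitAddCircle) x ≤ 1 / N := by
  have hN : (0 : ℝ) < N := Nat.cast_pos.2 (NeZero.pos N)
  obtain ⟨t, ⟨ht0, ht1⟩, rfl⟩ := AddCircle.coe_image_Ico_eq (1 : ℝ) 0 ▸ Set.mem_univ x
  have htN : 0 ≤ t * N := by positivity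
  have hlt : ⌊t * N⌋₊ < N := (Nat.floor_lt htN).2 (by nlinarith)
  refine ⟨⟨⌊t * N⌋₊, hlt⟩, ?_⟩
  rw [dist_comm, dist_eq_norm, ← AddCircle.coe_sub]
  refine (norm_coe_addCircle_le _ _).trans ?_
  have hle := Nat.floor_le htN
  have hlt' := Nat.lt_floor_add_one (t * N)
  rw [abs_of_nonneg (by rw [sub_nonneg, div_le_iff₀ hN]; exact hle), sub_le_iff_le_add, ← add_div,
    le_div_iff₀ hN]
  linarith

lemma dist_birkhoffSum_coe_le {X : Type*} (p : ℝ) (f : X → X) (h : X → ℝ) (n : ℕ) (x y : X) :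
    dist (birkhoffSum f (fun z => (h z : AddCircle p)) n x)
        (birkhoffSum f (fun z => (h z : AddCircle p)) n y) ≤
      |birkhoffSum f h n x - birkhoffSum f h n y| := by
  have hcoe (z : X) : birkhoffSum f (fun w => (h w : AddCircle p)) n z =
      ((birkhoffSum f h n z : ℝ) : AddCircle p) :=
    (map_birkhoffSum (QuotientAddGroup.mk' (AddSubgroup.zmultiples p)) f h n z).symm
  rw [hcoe, hcoe, dist_eq_norm, ← AddCircle.coe_sub]
  exact norm_coe_addCircle_le _ _

theorem measureComplexity_rotation_skewProduct_le
    {ρ : Measure (UnitAddCircle × UnitAddCircle)} [IsProbabilityMeasure ρ] {a : UnitAddCircle}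
    {g : UnitAddCircle → UnitAddCircle} {n N : ℕ} [NeZero N] {A B ε : ℝ} (hA : 0 ≤ A) (hB : 0 ≤ B)
    (hε : (1 + A) / N + B < ε)
    (hg : ∀ i < n, ∀ x y, dist (birkhoffSum (· + a) g i x) (birkhoffSum (· + a) g i y) ≤
      A * dist x y + B) :
    measureComplexity (skewProduct (· + a) g) ρ n ε ≤ N ^ 2 := by
  have hmesh : 1 / (N : ℝ) + (A * (1 / N) + B) < ε := hε.trans_eq' (by ring)
  refine (measureComplexity_skewProduct_le (isometry_add_right a).lipschitz
    (fun j : Fin N => (((j : ℝ) / N : ℝ) : UnitAddCircle))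
    (fun j : Fin N => (((j : ℝ) / N : ℝ) : UnitAddCircle)) (by positivity) (by positivity) hmesh
    (exists_dist_div_le N) (exists_dist_div_le N) fun i hi x y hxy => ?_).trans_eq ?_
  · refine (hg i hi x y).trans ?_
    gcongr
  · rw [Fintype.card_fin, sq]

lemma measureComplexity_rotation_skewProduct_pow_le
    {ρ : Measure (UnitAddCircle × UnitAddCircle)} [IsProbabilityMeasure ρ] {a : UnitAddCircle}
    {h : UnitAddCircle → ℝ} {q M L : ℕ} {A B ε : ℝ} (hA : 0 ≤ A) (hB : 0 ≤ B) (hq : 0 < q)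
    (hM : 0 < M) (hAM : (1 + A) / M < ε / 2) (hBq : B / q < ε / 2)
    (hh : ∀ n x y, |birkhoffSum (· + a) h n x - birkhoffSum (· + a) h n y| ≤
      A * q * dist x y + B * n / q ^ (L + 1)) :
    measureComplexity (skewProduct (· + a) fun x => (h x : UnitAddCircle)) ρ (q ^ L) ε ≤
      (q * M) ^ 2 := by
  have : NeZero (q * M) := ⟨(Nat.mul_pos hq hM).ne'⟩
  have hq1 : (1 : ℝ) ≤ q := by exact_mod_cast hq
  have hmesh : (1 + A * q) / (q * M : ℕ) + B / q < ε := by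
    calc (1 + A * q) / (q * M : ℕ) + B / q ≤ (1 + A) * q / (q * M : ℕ) + B / q := by
          gcongr
          linarith
      _ = (1 + A) / M + B / q := by push_cast; field_simp
      _ < ε := by linarith
  refine measureComplexity_rotation_skewProduct_le (by positivity) (by positivity) hmesh
    fun n hn x y => (dist_birkhoffSum_coe_le _ _ _ _ _ _).trans ((hh n x y).trans ?_)
  have hn' : (n : ℝ) ≤ q ^ L := by exact_mod_cast hn.le
  refine add_le_add_right ?_ _
  calc B * n / (q : ℝ) ^ (L + 1) ≤ B * q ^ L / (q : ℝ) ^ (L + 1) := by gcongr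
    _ = B / q := by rw [pow_succ]; field_simp

end Circle

section FourierDecay

variable {a b : ℝ} (hab : a < b) {f : ℝ → ℂ}
include hab

lemma norm_fourierCoeffOn_le {C : ℝ} (hC : ∀ t ∈ Set.Icc a b, ‖f t‖ ≤ C) (n : ℤ) :
    ‖fourierCoeffOn hab f n‖ ≤ C := by
  have hba : 0 < b - a := sub_pos.2 hab
  have hint := intervalIntegral.norm_integral_le_of_norm_le_const (a := a) (b := b) (C := C)
    (f := fun t : ℝ => fourier (-n) (t : AddCircle (b - a)) • f t) fun t ht => by
      rw [Set.uIoc_of_le hab.le] at ht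
      rw [norm_smul, fourier_apply, Circle.norm_coe, one_mul]
      exact hC t (Set.Ioc_subset_Icc_self ht)
  rw [fourierCoeffOn_eq_integral, norm_smul, norm_of_nonneg (by positivity), one_div,
    inv_mul_le_iff₀ hba, mul_comm]
  rwa [abs_of_pos hba] at hint

lemma fourierCoeffOn_deriv (hf : ContDiff ℝ 1 f) (hfab : f a = f b) (n : ℤ) :
    fourierCoeffOn hab (deriv f) n =
      2 * π * Complex.I * n / (b - a) * fourierCoeffOn hab f n := by
  have hderiv (t : ℝ) : HasDerivAt f (deriv f t) t := (hf.differentiable one_ne_zero t).hasDerivAt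
  have hint : IntervalIntegrable (deriv f) volume a b :=
    (hf.continuous_deriv le_rfl).intervalIntegrable _ _
  have hba : (b : ℂ) - a ≠ 0 := by exact_mod_cast (sub_pos.2 hab).ne'
  rcases eq_or_ne n 0 with rfl | hn
  · rw [fourierCoeffOn_eq_integral]
    simp [intervalIntegral.integral_deriv_eq_sub (fun t _ => (hderiv t).differentiableAt) hint,
      hfab]
  · rw [fourierCoeffOn_of_hasDerivAt hab hn (fun t _ => hderiv t) hint, hfab, sub_self]
    have hn' : (n : ℂ) ≠ 0 := by exact_mod_cast hn
    have hπ : (π : ℂ) ≠ 0 := by exact_mod_cast pi_ne_zero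
    have hI := Complex.I_ne_zero
    field_simp
    ring

lemma fourierCoeffOn_iteratedDeriv (k : ℕ) (hf : ContDiff ℝ k f)
    (hper : Function.Periodic f (b - a)) (n : ℤ) :
    fourierCoeffOn hab (iteratedDeriv k f) n =
      (2 * π * Complex.I * n / (b - a)) ^ k * fourierCoeffOn hab f n := by
  induction k generalizing f with
  | zero => simp
  | succ k ih =>
    have hper' : Function.Periodic (deriv f) (b - a) := fun t => by
      rw [← deriv_comp_add_const, funext hper]
    have hfab : f a = f b := by simpa using (hper a).symm
    have hf' : ContDiff ℝ k (deriv f) := (contDiff_succ_iff_deriv.1 (mod_cast hf)).2.2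
    rw [iteratedDeriv_succ', ih hf' hper',
      fourierCoeffOn_deriv hab (hf.of_le (by simp)) hfab, pow_succ, mul_assoc (_ ^ k)]

lemma exists_norm_fourierCoeffOn_mul_pow_le (k : ℕ) (hf : ContDiff ℝ k f)
    (hper : Function.Periodic f (b - a)) :
    ∃ C, ∀ n : ℤ, ‖fourierCoeffOn hab f n‖ * |(n : ℝ)| ^ k ≤ C := by
  obtain ⟨C, hC⟩ := isCompact_Icc.exists_bound_of_continuousOn
    (hf.continuous_iteratedDeriv k le_rfl).continuousOn (s := Set.Icc a b)
  have hba : 0 < b - a := sub_pos.2 hab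
  refine ⟨C * ((b - a) / (2 * π)) ^ k, fun n => ?_⟩
  have hbound := norm_fourierCoeffOn_le hab hC n
  have hnorm : ‖2 * π * Complex.I * n / (b - a : ℂ)‖ = 2 * π / (b - a) * |(n : ℝ)| := by
    rw [← Complex.ofReal_sub]
    simp only [norm_div, norm_mul, Complex.norm_I, Complex.norm_real, Complex.norm_intCast,
      Complex.norm_ofNat, norm_eq_abs, abs_of_pos pi_pos, abs_of_pos hba]
    ring
  rw [fourierCoeffOn_iteratedDeriv hab k hf hper, norm_mul, norm_pow, hnorm] at hbound
  calc ‖fourierCoeffOn hab f n‖ * |(n : ℝ)| ^ k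
      = (2 * π / (b - a) * |(n : ℝ)|) ^ k * ‖fourierCoeffOn hab f n‖ *
          ((b - a) / (2 * π)) ^ k := by
        rw [mul_right_comm, ← mul_pow, mul_right_comm, div_mul_div_cancel₀' (by positivity),
          div_self (by positivity), one_mul, mul_comm]
    _ ≤ C * ((b - a) / (2 * π)) ^ k := by gcongr

end FourierDecay

section FourierSummability

variable {p : ℝ} [Fact (0 < p)]

lemma fourierCoeff_eq_fourierCoeffOn (f : AddCircle p → ℂ) (a : ℝ) (n : ℤ) :
    fourierCoeff f n =
      fourierCoeffOn (lt_add_of_pos_right a (Fact.out : 0 < p)) (fun t : ℝ => f t) n := by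
  rw [← fourierCoeff_liftIco_eq (T := p)]
  congr 1
  funext x
  obtain ⟨t, ht, rfl⟩ := AddCircle.coe_image_Ico_eq p a ▸ Set.mem_univ x
  rw [AddCircle.liftIco_coe_apply ht]

lemma summable_norm_fourierCoeff_mul_pow {f : AddCircle p → ℂ} {k : ℕ}
    (hf : ContDiff ℝ (k + 2) fun t : ℝ => f t) :
    Summable fun n : ℤ => ‖fourierCoeff f n‖ * |(n : ℝ)| ^ k := by
  obtain ⟨C, hC⟩ := exists_norm_fourierCoeffOn_mul_pow_le
    (lt_add_of_pos_right (0 : ℝ) (Fact.out : 0 < p)) (k + 2) (mod_cast hf)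
    fun t => by simp
  refine Summable.of_norm_bounded_eventually
    ((summable_one_div_int_pow.2 one_lt_two).mul_left C) ?_
  filter_upwards [(Set.finite_singleton (0 : ℤ)).compl_mem_cofinite] with n (hn : n ≠ 0)
  have hn2 : (0 : ℝ) < |(n : ℝ)| ^ 2 := by positivity
  rw [norm_of_nonneg (by positivity), mul_one_div, ← sq_abs, le_div_iff₀ hn2, mul_assoc, ← pow_add,
    fourierCoeff_eq_fourierCoeffOn f 0]
  exact hC n

lemma hasSum_fourier_of_contDiff {f : AddCircle p → ℂ} (hf : ContDiff ℝ 2 fun t : ℝ => f t)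
    (x : AddCircle p) : HasSum (fun n : ℤ => fourierCoeff f n * fourier n x) (f x) := by
  let F : C(AddCircle p, ℂ) := ⟨f, isQuotientMap_quotient_mk'.continuous_iff.2 hf.continuous⟩
  have hsum : Summable (fourierCoeff F) := by
    refine Summable.of_norm ?_
    simpa [F] using summable_norm_fourierCoeff_mul_pow (k := 0) (mod_cast hf)
  exact has_pointwise_sum_fourier_series_of_summable hsum x

end FourierSummability

section Characters

variable {p : ℝ}

lemma fourier_apply_add (m : ℤ) (x y : AddCircle p) :
    (fourier m (x + y) : ℂ) = fourier m x * fourier m y := by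
  simp [fourier_apply, smul_add, AddCircle.toCircle_add]

lemma fourier_apply_nsmul (m : ℤ) (j : ℕ) (x : AddCircle p) :
    (fourier m (j • x) : ℂ) = fourier m x ^ j := by
  simp [fourier_apply, smul_comm m j x, AddCircle.toCircle_nsmul]

lemma norm_fourier_apply (m : ℤ) (x : AddCircle p) : ‖(fourier m x : ℂ)‖ = 1 :=
  Circle.norm_coe _

lemma norm_fourier_sub_one (m : ℤ) (x : UnitAddCircle) :
    ‖(fourier m x : ℂ) - 1‖ = 2 * |sin (π * ‖m • x‖)| := by
  rw [fourier_apply]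
  generalize m • x = y
  induction y using QuotientAddGroup.induction_on with
  | H t =>
    have hexp : (AddCircle.toCircle (t : UnitAddCircle) : ℂ) =
        Complex.exp (Complex.I * (2 * (π * t) : ℝ)) := by
      rw [AddCircle.toCircle_apply_mk, Circle.coe_exp]
      congr 1
      push_cast
      ring
    have hround : |sin (π * |t - round t|)| = |sin (π * t)| := by
      have habs (s : ℝ) : |sin (π * |s|)| = |sin (π * s)| := by
        rcases abs_choice s with hs | hs <;> simp [hs]
      rw [habs, mul_sub, mul_comm π (round t : ℝ), sin_sub_int_mul_pi, abs_mul, abs_neg_one_zpow,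
        one_mul]
    rw [UnitAddCircle.norm_eq, hround]
    refine (congrArg (‖· - 1‖) hexp).trans ?_
    rw [Complex.norm_exp_I_mul_ofReal_sub_one, mul_div_cancel_left₀ _ two_ne_zero, norm_mul,
      norm_eq_abs, norm_eq_abs, abs_two]

lemma four_mul_norm_zsmul_le (m : ℤ) (x : UnitAddCircle) :
    4 * ‖m • x‖ ≤ ‖(fourier m x : ℂ) - 1‖ := by
  have hhalf : ‖m • x‖ ≤ 1 / 2 := by
    simpa using AddCircle.norm_le_half_period 1 one_ne_zero (x := m • x)
  have hπ : |π * ‖m • x‖| ≤ π / 2 := by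
    rw [abs_of_nonneg (by positivity)]
    nlinarith [pi_pos]
  calc 4 * ‖m • x‖ = 2 * (2 / π * |π * ‖m • x‖|) := by
        rw [abs_of_nonneg (by positivity)]
        field_simp
        ring
    _ ≤ 2 * |sin (π * ‖m • x‖)| := by gcongr; exact mul_abs_le_abs_sin hπ
    _ = ‖(fourier m x : ℂ) - 1‖ := (norm_fourier_sub_one m x).symm

lemma norm_fourier_sub_le (m : ℤ) (x y : UnitAddCircle) :
    ‖(fourier m x : ℂ) - fourier m y‖ ≤ 2 * π * |(m : ℝ)| * dist x y := by
  have hfactor : (fourier m x : ℂ) - fourier m y = fourier m y * (fourier m (x - y) - 1) := by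
    rw [mul_sub, ← fourier_apply_add, mul_one, add_sub_cancel]
  calc ‖(fourier m x : ℂ) - fourier m y‖ = 2 * |sin (π * ‖m • (x - y)‖)| := by
        rw [hfactor, norm_mul, norm_fourier_apply, one_mul, norm_fourier_sub_one]
    _ ≤ 2 * (π * ‖m • (x - y)‖) := by
        gcongr
        exact abs_sin_le_abs.trans_eq (abs_of_nonneg (by positivity))
    _ ≤ 2 * (π * (|(m : ℝ)| * ‖x - y‖)) := by
        gcongr
        simpa [Int.norm_eq_abs] using norm_zsmul_le m (x - y)
    _ = 2 * π * |(m : ℝ)| * dist x y := by rw [dist_eq_norm]; ring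

end Characters

section SmallDivisors

/-- `a` is nonresonant at scale `q`: no nonzero frequency `m` with `|m| ≤ q / 2` brings `m • a`
closer than `1 / (2 * q)` to `0`. This is the small-divisor condition satisfied by the rotation
angle at the denominators of its Dirichlet approximations. -/
def NonresonantAt (a : UnitAddCircle) (q : ℕ) : Prop :=
  ∀ m : ℤ, m ≠ 0 → 2 * |(m : ℝ)| ≤ q → 1 / (2 * (q : ℝ)) ≤ ‖m • a‖

lemma one_div_den_le_norm_zsmul (r : ℚ) {m : ℤ} (hm : ¬(r.den : ℤ) ∣ m) :
    1 / (r.den : ℝ) ≤ ‖m • ((r : ℝ) : UnitAddCircle)‖ := by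
  have hden : addOrderOf ((r : ℝ) : UnitAddCircle) = r.den := by
    simpa using AddCircle.addOrderOf_coe_rat (p := (1 : ℝ)) (q := r)
  have hdvd : addOrderOf (m • ((r : ℝ) : UnitAddCircle)) ∣ r.den := by
    rw [addOrderOf_dvd_iff_nsmul_eq_zero, smul_comm, ← hden, addOrderOf_nsmul_eq_zero, smul_zero]
  have hpos := Nat.pos_of_dvd_of_pos hdvd r.den_pos
  have hne : m • ((r : ℝ) : UnitAddCircle) ≠ 0 := fun h =>
    hm (hden ▸ addOrderOf_dvd_iff_zsmul_eq_zero.2 h)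
  have horder := AddCircle.le_add_order_smul_norm_of_isOfFinAddOrder (addOrderOf_pos_iff.1 hpos) hne
  rw [div_le_iff₀' (by exact_mod_cast r.den_pos)]
  calc (1 : ℝ) ≤ addOrderOf (m • ((r : ℝ) : UnitAddCircle)) * ‖m • ((r : ℝ) : UnitAddCircle)‖ := by
        simpa using horder
    _ ≤ r.den * ‖m • ((r : ℝ) : UnitAddCircle)‖ := by
        gcongr
        exact Nat.le_of_dvd r.den_pos hdvd

lemma nonresonantAt_den {α : ℝ} {r : ℚ} (hr : |α - r| ≤ 1 / (r.den : ℝ) ^ 2) :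
    NonresonantAt (α : UnitAddCircle) r.den := by
  intro m hm0 hm
  have hden : (0 : ℝ) < r.den := by exact_mod_cast r.den_pos
  have hdvd : ¬(r.den : ℤ) ∣ m := fun h => by
    have hle : (r.den : ℝ) ≤ |(m : ℝ)| := by
      exact_mod_cast Int.le_of_dvd (abs_pos.2 hm0) ((dvd_abs _ _).2 h)
    linarith
  have hclose : ‖m • ((α : UnitAddCircle) - ((r : ℝ) : UnitAddCircle))‖ ≤ 1 / (2 * r.den) := by
    calc ‖m • ((α : UnitAddCircle) - ((r : ℝ) : UnitAddCircle))‖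
        ≤ |(m : ℝ)| * ‖((α - r : ℝ) : UnitAddCircle)‖ := by
          simpa [Int.norm_eq_abs] using norm_zsmul_le m ((α - r : ℝ) : UnitAddCircle)
      _ ≤ r.den / 2 * (1 / (r.den : ℝ) ^ 2) := by
          gcongr
          · linarith
          · exact (norm_coe_addCircle_le _ _).trans hr
      _ = 1 / (2 * r.den) := by field_simp
  have hhalf : 1 / (r.den : ℝ) = 1 / (2 * r.den) + 1 / (2 * r.den) := by field_simp; norm_num
  have htriangle := norm_sub_norm_le (m • ((r : ℝ) : UnitAddCircle)) (m • (α : UnitAddCircle))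
  rw [norm_sub_rev, ← smul_sub] at htriangle
  linarith [one_div_den_le_norm_zsmul r hdvd]

/- Dirichlet's theorem gives the approximations; their denominators are unbounded because the
irrational `α` stays away from the rationals of denominator at most `B`. -/
lemma frequently_exists_rat_den_eq {α : ℝ} (hα : Irrational α) :
    ∃ᶠ q : ℕ in atTop, ∃ r : ℚ, r.den = q ∧ |α - r| ≤ 1 / (q : ℝ) ^ 2 := by
  refine frequently_atTop.2 fun B => ?_
  have hgap : ∀ᶠ n : ℕ in atTop, ∀ r : ℚ, r.den ≤ B → 1 / (n : ℝ) ≤ dist α r :=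
    (tendsto_const_div_atTop_nhds_zero_nat 1).eventually
      (hα.eventually_forall_le_dist_cast_rat_of_den_le B)
  obtain ⟨n, hgap, hn⟩ := (hgap.and (eventually_gt_atTop 0)).exists
  obtain ⟨r, hr, hrn⟩ := exists_rat_abs_sub_le_and_den_le α hn
  have hden : (1 : ℝ) ≤ r.den := by exact_mod_cast r.den_pos
  have hrn' : (r.den : ℝ) ≤ n := by exact_mod_cast hrn
  refine ⟨r.den, ?_, r, rfl, hr.trans ?_⟩
  · by_contra! hB
    have hlt : dist α r < 1 / n := by
      calc dist α r ≤ 1 / ((n + 1) * r.den) := hr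
        _ < 1 / n := by
          gcongr
          nlinarith
    exact hlt.not_ge (hgap r hB.le)
  · gcongr
    nlinarith

lemma frequently_nonresonantAt {α : ℝ} (hα : Irrational α) :
    ∃ᶠ q in atTop, NonresonantAt (α : UnitAddCircle) q := by
  refine (frequently_exists_rat_den_eq hα).mono ?_
  rintro _ ⟨r, rfl, hr⟩
  exact nonresonantAt_den hr

end SmallDivisors

section BirkhoffSums

variable {a : UnitAddCircle}

lemma norm_geom_sum_mul_norm_sub_one_le {z : ℂ} (hz : ‖z‖ = 1) (n : ℕ) :
    ‖∑ j ∈ Finset.range n, z ^ j‖ * ‖z - 1‖ ≤ 2 := by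
  rw [← norm_mul, geom_sum_mul]
  calc ‖z ^ n - 1‖ ≤ ‖z ^ n‖ + ‖(1 : ℂ)‖ := norm_sub_le _ _
    _ = 2 := by rw [norm_pow, hz, one_pow, norm_one, one_add_one_eq_two]

lemma birkhoffSum_fourier {p : ℝ} (a : AddCircle p) (m : ℤ) (n : ℕ) (x : AddCircle p) :
    birkhoffSum (· + a) (fun y => (fourier m y : ℂ)) n x =
      (∑ j ∈ Finset.range n, (fourier m a : ℂ) ^ j) * fourier m x := by
  rw [birkhoffSum, Finset.sum_mul]
  refine Finset.sum_congr rfl fun j _ => ?_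
  rw [add_right_iterate, fourier_apply_add, fourier_apply_nsmul, mul_comm]

lemma norm_birkhoffSum_fourier_sub (a : UnitAddCircle) (m : ℤ) (n : ℕ) (x y : UnitAddCircle) :
    ‖birkhoffSum (· + a) (fun z => (fourier m z : ℂ)) n x -
        birkhoffSum (· + a) (fun z => (fourier m z : ℂ)) n y‖ =
      ‖∑ j ∈ Finset.range n, (fourier m a : ℂ) ^ j‖ * ‖(fourier m x : ℂ) - fourier m y‖ := by
  rw [birkhoffSum_fourier, birkhoffSum_fourier, ← mul_sub, norm_mul]

lemma NonresonantAt.norm_geom_sum_fourier_le {q : ℕ} (ha : NonresonantAt a q) {m : ℤ}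
    (hm0 : m ≠ 0) (hm : 2 * |(m : ℝ)| ≤ q) (n : ℕ) :
    ‖∑ j ∈ Finset.range n, (fourier m a : ℂ) ^ j‖ ≤ q := by
  have hq : (0 : ℝ) < q := lt_of_lt_of_le (by positivity) hm
  have hdivisor : 2 / (q : ℝ) ≤ ‖(fourier m a : ℂ) - 1‖ :=
    calc 2 / (q : ℝ) = 4 * (1 / (2 * q)) := by ring
      _ ≤ 4 * ‖m • a‖ := by gcongr; exact ha m hm0 hm
      _ ≤ ‖(fourier m a : ℂ) - 1‖ := four_mul_norm_zsmul_le m a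
  have hgeom := norm_geom_sum_mul_norm_sub_one_le (norm_fourier_apply m a) n
  have hle := (mul_le_mul_of_nonneg_left hdivisor (norm_nonneg _)).trans hgeom
  rw [mul_div_assoc', div_le_iff₀ hq] at hle
  linarith

lemma norm_birkhoffSum_fourier_sub_le_two_mul (a : UnitAddCircle) (m : ℤ) (n : ℕ)
    (x y : UnitAddCircle) :
    ‖birkhoffSum (· + a) (fun z => (fourier m z : ℂ)) n x -
        birkhoffSum (· + a) (fun z => (fourier m z : ℂ)) n y‖ ≤ 2 * n := by
  have hsum : ‖∑ j ∈ Finset.range n, (fourier m a : ℂ) ^ j‖ ≤ n := by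
    simpa [norm_fourier_apply, -fourier_apply] using
      norm_sum_le (Finset.range n) fun j => (fourier m a : ℂ) ^ j
  have hsub : ‖(fourier m x : ℂ) - fourier m y‖ ≤ 2 := by
    simpa [norm_fourier_apply, one_add_one_eq_two, -fourier_apply] using
      norm_sub_le (fourier m x : ℂ) (fourier m y)
  rw [norm_birkhoffSum_fourier_sub, mul_comm 2]
  gcongr

lemma NonresonantAt.norm_birkhoffSum_fourier_sub_le {q : ℕ} (hq : 0 < q) (ha : NonresonantAt a q)
    (K n : ℕ) (m : ℤ) (x y : UnitAddCircle) :
    ‖birkhoffSum (· + a) (fun z => (fourier m z : ℂ)) n x -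
        birkhoffSum (· + a) (fun z => (fourier m z : ℂ)) n y‖ ≤
      q * (2 * π * |(m : ℝ)| * dist x y) + 2 * n * (2 * |(m : ℝ)| / q) ^ K := by
  rcases eq_or_ne m 0 with rfl | hm0
  · rw [norm_birkhoffSum_fourier_sub]
    simp only [fourier_zero, sub_self, norm_zero, mul_zero]
    positivity
  rcases le_or_gt (2 * |(m : ℝ)|) q with hlow | hhigh
  · refine le_add_of_le_of_nonneg ?_ (by positivity)
    rw [norm_birkhoffSum_fourier_sub]
    gcongr
    · exact ha.norm_geom_sum_fourier_le hm0 hlow n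
    · exact norm_fourier_sub_le m x y
  · refine le_add_of_nonneg_of_le (by positivity)
      ((norm_birkhoffSum_fourier_sub_le_two_mul a m n x y).trans ?_)
    have hone : 1 ≤ 2 * |(m : ℝ)| / q := (one_le_div (by exact_mod_cast hq)).2 hhigh.le
    exact le_mul_of_one_le_right (by positivity) (one_le_pow₀ hone)

lemma hasSum_birkhoffSum {X ι M : Type*} [AddCommMonoid M] [TopologicalSpace M] [ContinuousAdd M]
    (T : X → X) {u : ι → X → M} {f : X → M} (hf : ∀ x, HasSum (fun i => u i x) (f x)) (n : ℕ)
    (x : X) : HasSum (fun i => birkhoffSum T (u i) n x) (birkhoffSum T f n x) :=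
  hasSum_sum fun j _ => hf (T^[j] x)

lemma NonresonantAt.norm_birkhoffSum_sub_le_of_hasSum {q : ℕ} (hq : 0 < q)
    (ha : NonresonantAt a q) {f : UnitAddCircle → ℂ} {c : ℤ → ℂ}
    (hf : ∀ x, HasSum (fun m => c m * fourier m x) (f x)) {K : ℕ}
    (hc : Summable fun m => ‖c m‖ * |(m : ℝ)|) (hcK : Summable fun m => ‖c m‖ * |(m : ℝ)| ^ K)
    (n : ℕ) (x y : UnitAddCircle) :
    ‖birkhoffSum (· + a) f n x - birkhoffSum (· + a) f n y‖ ≤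
      2 * π * (∑' m, ‖c m‖ * |(m : ℝ)|) * q * dist x y +
        2 ^ (K + 1) * (∑' m, ‖c m‖ * |(m : ℝ)| ^ K) * n / q ^ K := by
  have hsum := (hasSum_birkhoffSum (· + a) hf n x).sub (hasSum_birkhoffSum (· + a) hf n y)
  have hbound := (hc.hasSum.mul_left (2 * π * q * dist x y)).add
    (hcK.hasSum.mul_left (2 ^ (K + 1) * n / (q : ℝ) ^ K))
  refine (hsum.norm_le_of_bounded hbound fun m => ?_).trans_eq (by ring)
  have hfactor (z : UnitAddCircle) : birkhoffSum (· + a) (fun w => c m * fourier m w) n z =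
      c m * birkhoffSum (· + a) (fun w => (fourier m w : ℂ)) n z :=
    (Finset.mul_sum _ _ _).symm
  rw [hfactor, hfactor, ← mul_sub, norm_mul]
  calc ‖c m‖ * ‖birkhoffSum (· + a) (fun w => (fourier m w : ℂ)) n x -
          birkhoffSum (· + a) (fun w => (fourier m w : ℂ)) n y‖
      ≤ ‖c m‖ * (q * (2 * π * |(m : ℝ)| * dist x y) + 2 * n * (2 * |(m : ℝ)| / q) ^ K) := by
        gcongr
        exact ha.norm_birkhoffSum_fourier_sub_le hq K n m x y
    _ = 2 * π * q * dist x y * (‖c m‖ * |(m : ℝ)|) +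
          2 ^ (K + 1) * n / (q : ℝ) ^ K * (‖c m‖ * |(m : ℝ)| ^ K) := by
        rw [div_pow, mul_pow]
        ring

theorem exists_abs_birkhoffSum_sub_le_of_contDiff {h : UnitAddCircle → ℝ} {K : ℕ} (hK : 1 ≤ K)
    (hh : ContDiff ℝ (K + 2) fun t : ℝ => h t) :
    ∃ A B : ℝ, 0 ≤ A ∧ 0 ≤ B ∧ ∀ (a : UnitAddCircle) (q n : ℕ), 0 < q → NonresonantAt a q →
      ∀ x y, |birkhoffSum (· + a) h n x - birkhoffSum (· + a) h n y| ≤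
        A * q * dist x y + B * n / q ^ K := by
  let f : UnitAddCircle → ℂ := fun x => h x
  have hf : ContDiff ℝ (K + 2) fun t : ℝ => f t := Complex.ofRealCLM.contDiff.comp hh
  have hf1 : ContDiff ℝ ((1 : ℕ) + 2) fun t : ℝ => f t :=
    hf.of_le (by gcongr)
  refine ⟨2 * π * ∑' m, ‖fourierCoeff f m‖ * |(m : ℝ)|,
    2 ^ (K + 1) * ∑' m, ‖fourierCoeff f m‖ * |(m : ℝ)| ^ K, by positivity, by positivity,
    fun a q n hq ha x y => ?_⟩
  have hbound := ha.norm_birkhoffSum_sub_le_of_hasSum hq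
    (hasSum_fourier_of_contDiff (hf.of_le (by simp)))
    (by simpa using summable_norm_fourierCoeff_mul_pow hf1)
    (summable_norm_fourierCoeff_mul_pow hf) n x y
  have hcast (z : UnitAddCircle) : birkhoffSum (· + a) f n z = (birkhoffSum (· + a) h n z : ℝ) :=
    (map_birkhoffSum Complex.ofRealHom (· + a) h n z).symm
  rwa [hcast, hcast, ← Complex.ofReal_sub, Complex.norm_real] at hbound

end BirkhoffSums

theorem subPolynomial_complexity_of_smooth_skew_product_general
    (α : ℝ) (hα : Irrational α) (h : AddCircle (1 : ℝ) → ℝ)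
    (hsmooth : ContDiff ℝ ((⊤ : ℕ∞) : WithTop ℕ∞) (fun t : ℝ => h ((t : AddCircle (1 : ℝ)))))
    (T : AddCircle (1 : ℝ) × AddCircle (1 : ℝ) → AddCircle (1 : ℝ) × AddCircle (1 : ℝ))
    (hT : ∀ p, T p = (p.1 + (α : AddCircle (1 : ℝ)), p.2 + ((h p.1 : ℝ) : AddCircle (1 : ℝ))))
    (ρ : Measure (AddCircle (1 : ℝ) × AddCircle (1 : ℝ))) (hρprob : IsProbabilityMeasure ρ) :
    SubPolynomialComplexity T ρ := by
  obtain rfl : T = skewProduct (· + (α : UnitAddCircle)) (fun x => (h x : UnitAddCircle)) :=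
    funext hT
  refine subPolynomialComplexity_of_frequently_le 2 fun ε hε L => ?_
  obtain ⟨A, B, hA, hB, hAB⟩ := exists_abs_birkhoffSum_sub_le_of_contDiff (K := L + 1)
    (by simp) (hsmooth.of_le (WithTop.coe_le_coe.2 le_top))
  obtain ⟨M, hM0, hM⟩ : ∃ M : ℕ, 0 < M ∧ (1 + A) / M < ε / 2 := ((eventually_gt_atTop 0).and
    ((tendsto_const_div_atTop_nhds_zero_nat (1 + A)).eventually_lt_const (half_pos hε))).exists
  have hlarge : ∀ᶠ q : ℕ in atTop, 0 < q ∧ B / q < ε / 2 := (eventually_gt_atTop 0).and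
    ((tendsto_const_div_atTop_nhds_zero_nat B).eventually_lt_const (half_pos hε))
  refine ⟨M ^ 2, ((frequently_nonresonantAt hα).and_eventually hlarge).mono ?_⟩
  rintro q ⟨hq, hq0, hqB⟩
  have hcomplexity := measureComplexity_rotation_skewProduct_pow_le (ρ := ρ) hA hB hq0 hM0 hM hqB
    fun n => hAB α q n hq0 hq
  calc (measureComplexity _ ρ (q ^ L) ε : ℝ)
      ≤ ((q * M : ℕ) : ℝ) ^ 2 := by exact_mod_cast hcomplexity
    _ = M ^ 2 * q ^ 2 := by push_cast; ring

/-- For the skew product `T(x,y) = (x+α, y+h(x) mod 1)` on `𝕋²` over an irrational rotation,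
with `h : 𝕋¹ → ℝ` a `C^∞` (homotopically trivial) function, every `T`-invariant Borel
probability measure has sub-polynomial measure complexity. -/
theorem subPolynomial_complexity_of_smooth_skew_product
    (α : ℝ) (hα : Irrational α) (hα01 : α ∈ Set.Ico (0 : ℝ) 1)
    (h : AddCircle (1 : ℝ) → ℝ)
    (hsmooth : ContDiff ℝ ((⊤ : ℕ∞) : WithTop ℕ∞) (fun t : ℝ => h ((t : AddCircle (1 : ℝ)))))
    (T : AddCircle (1 : ℝ) × AddCircle (1 : ℝ) → AddCircle (1 : ℝ) × AddCircle (1 : ℝ))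
    (hT : ∀ p, T p = (p.1 + (α : AddCircle (1 : ℝ)), p.2 + ((h p.1 : ℝ) : AddCircle (1 : ℝ))))
    (ρ : Measure (AddCircle (1 : ℝ) × AddCircle (1 : ℝ)))
    (hρprob : IsProbabilityMeasure ρ) (hρinv : MeasurePreserving T ρ ρ) :
    SubPolynomialComplexity T ρ := by
  exact subPolynomial_complexity_of_smooth_skew_product_general α hα h hsmooth T hT ρ hρprob
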